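/- arXiv:math/0212105 — 2 statements merged into one kernel-verified Lean document; each statement's English description precedes it below -/
import Mathlib

section
/- Let f : ℝ → ℂ be locally integrable such that F(x) = ∫_0^x f has finite limits as x → ∞ and as x → −∞, let s ∈ ℝ be such that the Fourier transform f̂(s) exists, and let g : ℝ → ℝ be Lebesgue integrable on ℝ and of bounded variation on ℝ, with ordinary Fourier transform ĝ(s) = ∫_{-∞}^{∞} e^{-isx} g(x) dx. Define f∗g(x) = lim_{T₁,T₂→∞} ∫_{-T₁}^{T₂} f(x−t) g(t) dt (which exists for every x). Then the Fourier transform of f∗g exists at s and (f∗g)^(s) = f̂(s) · ĝ(s). -/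
open MeasureTheory Filter

/-- The Fourier transform of `f` exists at `s` with value `L`:
`∫_{-T₁}^{T₂} e^{-isx} f(x) dx → L` as `T₁ → ∞` and `T₂ → ∞` independently. -/
def HasFourierHK (f : ℝ → ℂ) (s : ℝ) (L : ℂ) : Prop :=
  Tendsto (fun T : ℝ × ℝ =>
      ∫ x in (-T.1)..T.2, Complex.exp (-(Complex.I * (s : ℂ) * (x : ℂ))) * f x)
    (atTop ×ˢ atTop) (nhds L)

lemma aux_upper {h : ℝ → ℂ} {a b K : ℝ} (S : Set ℝ) (hS : IsUpperSet S)
    (hK : ∀ c d, a ≤ c → c ≤ d → d ≤ b → ‖∫ t in c..d, h t‖ ≤ K) (hab : a ≤ b) :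
    ‖∫ t in Set.Ioc a b ∩ S, h t‖ ≤ K := by
  have hK0 : 0 ≤ K := (norm_nonneg _).trans (hK a a le_rfl le_rfl hab)
  rcases Set.eq_empty_or_nonempty (Set.Ioc a b ∩ S) with he | hne
  · rw [he]; simpa using hK0
  · set c := sInf (Set.Ioc a b ∩ S) with hc
    have hbd : BddBelow (Set.Ioc a b ∩ S) := ⟨a, fun x hx => hx.1.1.le⟩
    have hac : a ≤ c := le_csInf hne fun x hx => hx.1.1.le
    obtain ⟨y, hy⟩ := hne
    have hcb : c ≤ b := (csInf_le hbd hy).trans hy.1.2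
    have h1 : Set.Ioc c b ⊆ Set.Ioc a b ∩ S := by
      intro x hx
      obtain ⟨z, hz, hzx⟩ := exists_lt_of_csInf_lt ⟨y, hy⟩ hx.1
      exact ⟨⟨hac.trans_lt hx.1, hx.2⟩, hS hzx.le hz.2⟩
    have h2 : Set.Ioc a b ∩ S ⊆ Set.Icc c b := fun x hx => ⟨csInf_le hbd hx, hx.1.2⟩
    have h3 : (Set.Ioc a b ∩ S : Set ℝ) =ᵐ[volume] Set.Ioc c b := by
      refine Filter.EventuallyLE.antisymm ?_ h1.eventuallyLE
      exact h2.eventuallyLE.trans (Ioc_ae_eq_Icc (μ := volume)).symm.le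
    rw [setIntegral_congr_set h3, ← intervalIntegral.integral_of_le hcb]
    exact hK c b hac hcb le_rfl

lemma aux_mono {h : ℝ → ℂ} {p : ℝ → ℝ} {a b K M : ℝ} (hab : a ≤ b)
    (hi : IntegrableOn h (Set.Ioc a b)) (hp : Monotone p) (hM : ∀ x, |p x| ≤ M)
    (hK : ∀ c d, a ≤ c → c ≤ d → d ≤ b → ‖∫ t in c..d, h t‖ ≤ K) :
    ‖∫ t in a..b, h t * (p t : ℂ)‖ ≤ 3 * M * K := by
  have hM0 : 0 ≤ M := (abs_nonneg _).trans (hM 0)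
  have hmeas : MeasurableSet {z : ℝ × ℝ | z.2 < p z.1} :=
    measurableSet_lt measurable_snd (hp.measurable.comp measurable_fst)
  have hint : Integrable (Function.uncurry fun t u : ℝ =>
      ({z : ℝ × ℝ | z.2 < p z.1}).indicator (fun z => h z.1) (t, u))
      ((volume.restrict (Set.Ioc a b)).prod (volume.restrict (Set.Ioc (-M) M))) := by
    have := (Integrable.comp_fst hi (volume.restrict (Set.Ioc (-M) M))).indicator hmeas
    exact this
  have hswap := integral_integral_swap hint
  have hin : ∀ t, ∫ u in Set.Ioc (-M) M,
      ({z : ℝ × ℝ | z.2 < p z.1}).indicator (fun z => h z.1) (t, u) = h t * (p t : ℂ) + M * h t := by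
    intro t
    have hb := abs_le.1 (hM t)
    have : (fun u => ({z : ℝ × ℝ | z.2 < p z.1}).indicator (fun z => h z.1) (t, u))
        = (Set.Iio (p t)).indicator (fun _ => h t) := by
      ext u; simp [Set.indicator]
    rw [this, integral_indicator measurableSet_Iio, Measure.restrict_restrict measurableSet_Iio,
      setIntegral_congr_set (t := Set.Ioc (-M) (p t))]
    · rw [setIntegral_const, measureReal_def, Real.volume_Ioc, ENNReal.toReal_ofReal (by linarith)]
      simp; ring
    · have h1 : Set.Iio (p t) ∩ Set.Ioc (-M) M = Set.Ioo (-M) (p t) := by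
        ext u; simp only [Set.mem_inter_iff, Set.mem_Iio, Set.mem_Ioc, Set.mem_Ioo]
        constructor
        · rintro ⟨h, h', _⟩; exact ⟨h', h⟩
        · rintro ⟨h, h'⟩; exact ⟨h', h, by linarith⟩
      rw [h1]; exact Ioo_ae_eq_Ioc
  have hout : ∀ u, ‖∫ t in Set.Ioc a b,
      ({z : ℝ × ℝ | z.2 < p z.1}).indicator (fun z => h z.1) (t, u)‖ ≤ K := by
    intro u
    have : (fun t => ({z : ℝ × ℝ | z.2 < p z.1}).indicator (fun z => h z.1) (t, u))
        = ({t | u < p t} : Set ℝ).indicator h := by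
      ext t; simp [Set.indicator]
    have hms : MeasurableSet {t | u < p t} := measurableSet_lt measurable_const hp.measurable
    rw [this, integral_indicator hms, Measure.restrict_restrict hms, Set.inter_comm]
    exact aux_upper _ (fun x y hxy hx => lt_of_lt_of_le hx (hp hxy)) hK hab
  simp_rw [hin] at hswap
  have hpi : IntegrableOn (fun t => h t * (p t : ℂ)) (Set.Ioc a b) := by
    refine Integrable.mul_bdd (c := M) hi ?_ ?_
    · exact (Complex.measurable_ofReal.comp hp.measurable).aestronglyMeasurable
    · exact Filter.Eventually.of_forall fun x => by simpa using hM x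
  rw [integral_add hpi (hi.const_mul _), integral_const_mul] at hswap
  have hN := norm_setIntegral_le_of_norm_le_const (μ := volume) (s := Set.Ioc (-M) M) (C := K)
    (f := fun u => ∫ t in Set.Ioc a b,
      ({z : ℝ × ℝ | z.2 < p z.1}).indicator (fun z => h z.1) (t, u)) (by simp) (fun u _ => hout u)
  rw [← hswap, measureReal_def, Real.volume_Ioc, ENNReal.toReal_ofReal (by linarith)] at hN
  have hc := hK a b le_rfl hab le_rfl
  rw [intervalIntegral.integral_of_le hab] at hc ⊢
  have h4 : ‖(M : ℂ) * ∫ t in Set.Ioc a b, h t‖ ≤ M * K := by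
    rw [norm_mul, Complex.norm_real, Real.norm_of_nonneg hM0]; gcongr
  have h5 := norm_sub_le ((∫ t in Set.Ioc a b, h t * (p t : ℂ)) + M * ∫ t in Set.Ioc a b, h t)
    (M * ∫ t in Set.Ioc a b, h t)
  rw [add_sub_cancel_right] at h5
  linarith

/-- difference of bounded monotone functions -/
def IsBM (g : ℝ → ℝ) (M : ℝ) : Prop :=
  ∃ p q : ℝ → ℝ, Monotone p ∧ Monotone q ∧ (∀ x, |p x| ≤ M) ∧ (∀ x, |q x| ≤ M) ∧ g = p - q

lemma IsBM.of_bv {g : ℝ → ℝ} (hg : BoundedVariationOn g Set.univ) : ∃ M, IsBM g M := by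
  set V := (eVariationOn g Set.univ).toReal with hV
  have hl := hg.locallyBoundedVariationOn
  have h1 := variationOnFromTo.monotoneOn hl (Set.mem_univ (0:ℝ))
  have h2 := variationOnFromTo.sub_self_monotoneOn hl (Set.mem_univ (0:ℝ))
  have hb : ∀ x, |variationOnFromTo g Set.univ 0 x| ≤ V := by
    intro x
    have : ∀ s, (eVariationOn g (Set.univ ∩ s)).toReal ≤ V := fun s =>
      ENNReal.toReal_mono hg (eVariationOn.mono g (Set.inter_subset_left))
    unfold variationOnFromTo
    split_ifs <;> simp only [abs_neg, ENNReal.abs_toReal] <;> exact this _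
  have hgb : ∀ x, |g x| ≤ |g 0| + V := by
    intro x
    have := hg.dist_le (Set.mem_univ x) (Set.mem_univ 0)
    rw [Real.dist_eq] at this
    have h3 := abs_add_le (g x - g 0) (g 0)
    rw [sub_add_cancel] at h3
    linarith
  have hV0 : 0 ≤ V := ENNReal.toReal_nonneg
  refine ⟨|g 0| + V + V, variationOnFromTo g Set.univ 0, variationOnFromTo g Set.univ 0 - g,
    monotoneOn_univ.1 h1, monotoneOn_univ.1 h2, fun x => ?_, fun x => ?_, by simp⟩
  · have := abs_nonneg (g 0); linarith [hb x]
  · have := abs_sub (variationOnFromTo g Set.univ 0 x) (g x)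
    simp only [Pi.sub_apply]
    linarith [hb x, hgb x]

lemma IsBM.measurable {g : ℝ → ℝ} {M : ℝ} (hg : IsBM g M) : Measurable g := by
  obtain ⟨p, q, hp, hq, -, -, rfl⟩ := hg
  exact hp.measurable.sub hq.measurable

lemma IsBM.bdd {g : ℝ → ℝ} {M : ℝ} (hg : IsBM g M) (x : ℝ) : |g x| ≤ 2 * M := by
  obtain ⟨p, q, hp, hq, hp', hq', rfl⟩ := hg
  have := abs_sub (p x) (q x)
  simp only [Pi.sub_apply]
  linarith [hp' x, hq' x]

lemma IsBM.nonneg {g : ℝ → ℝ} {M : ℝ} (hg : IsBM g M) : 0 ≤ M := by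
  have := hg.bdd 0
  linarith [abs_nonneg (g 0)]

lemma IsBM.mul_int {g : ℝ → ℝ} {M : ℝ} (hg : IsBM g M) {h : ℝ → ℂ} {μ : Measure ℝ}
    (hi : Integrable h μ) : Integrable (fun t => h t * (g t : ℂ)) μ := by
  refine Integrable.mul_bdd (c := 2 * M) hi ?_ ?_
  · exact (Complex.measurable_ofReal.comp hg.measurable).aestronglyMeasurable
  · exact Filter.Eventually.of_forall fun x => by simpa using hg.bdd x

lemma IsBM.bound {g : ℝ → ℝ} {M K : ℝ} (hg : IsBM g M) {h : ℝ → ℂ} {a b : ℝ} (hab : a ≤ b)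
    (hi : IntegrableOn h (Set.Ioc a b))
    (hK : ∀ c d, a ≤ c → c ≤ d → d ≤ b → ‖∫ t in c..d, h t‖ ≤ K) :
    ‖∫ t in a..b, h t * (g t : ℂ)‖ ≤ 6 * M * K := by
  obtain ⟨p, q, hp, hq, hp', hq', rfl⟩ := hg
  have hM0 : 0 ≤ M := (abs_nonneg _).trans (hp' 0)
  have e1 := aux_mono hab hi hp hp' hK
  have e2 := aux_mono hab hi hq hq' hK
  have i1 : ∀ r : ℝ → ℝ, Monotone r → (∀ x, |r x| ≤ M) →
      IntervalIntegrable (fun t => h t * (r t : ℂ)) volume a b := by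
    intro r hr hr'
    rw [intervalIntegrable_iff_integrableOn_Ioc_of_le hab]
    refine IsBM.mul_int (M := M) ⟨r, 0, hr, monotone_const, hr', by simpa using hM0, by simp⟩ hi
  have : (fun t => h t * (((p - q) t : ℝ) : ℂ)) = fun t => h t * (p t : ℂ) - h t * (q t : ℂ) := by
    ext t; simp; ring
  rw [this, intervalIntegral.integral_sub (i1 p hp hp') (i1 q hq hq')]
  have := norm_sub_le (∫ t in a..b, h t * (p t : ℂ)) (∫ t in a..b, h t * (q t : ℂ))
  linarith

lemma aux_conv {g : ℝ → ℝ} {M : ℝ} (hg : IsBM g M) {h : ℝ → ℂ}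
    (hi : ∀ a b, IntervalIntegrable h volume a b) (l : Filter ℝ) [l.NeBot]
    (hl : ∀ S ∈ l, ∃ S' ∈ l, S' ⊆ S ∧ S'.OrdConnected)
    (hH : ∃ c : ℂ, Tendsto (fun x : ℝ => ∫ t in (0:ℝ)..x, h t) l (nhds c)) :
    ∃ c : ℂ, Tendsto (fun x : ℝ => ∫ t in (0:ℝ)..x, h t * (g t : ℂ)) l (nhds c) := by
  have hM0 := hg.nonneg
  have hgi : ∀ a b, IntervalIntegrable (fun t => h t * (g t : ℂ)) volume a b := fun a b =>
    ⟨hg.mul_int (hi a b).1, hg.mul_int (hi a b).2⟩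
  rw [← cauchy_map_iff_exists_tendsto, Metric.cauchy_iff] at *
  refine ⟨inferInstance, fun ε hε => ?_⟩
  obtain ⟨t, ht, ht'⟩ := hH.2 (ε / (6 * M + 1)) (by positivity)
  obtain ⟨S, hSl, hSt, hSo⟩ := hl _ (mem_map.1 ht)
  refine ⟨_, image_mem_map hSl, ?_⟩
  have key : ∀ a ∈ S, ∀ b ∈ S, a ≤ b → ‖∫ t in a..b, h t * (g t : ℂ)‖ < ε := by
    intro a ha b hb hab
    refine (hg.bound hab (hi a b).1 (K := ε / (6 * M + 1)) ?_).trans_lt ?_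
    · intro c d hac hcd hdb
      have hc : c ∈ S := hSo.out ha hb ⟨hac, hcd.trans hdb⟩
      have hd : d ∈ S := hSo.out ha hb ⟨hac.trans hcd, hdb⟩
      have := ht' _ (hSt hd) _ (hSt hc)
      rw [dist_eq_norm, intervalIntegral.integral_interval_sub_left (hi _ _) (hi _ _)] at this
      exact this.le
    · rw [mul_div_assoc', div_lt_iff₀ (by positivity)]; nlinarith
  rintro _ ⟨x, hx, rfl⟩ _ ⟨y, hy, rfl⟩
  rw [dist_eq_norm, intervalIntegral.integral_interval_sub_left (hgi _ _) (hgi _ _)]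
  rcases le_total x y with hxy | hxy
  · rw [intervalIntegral.integral_symm, norm_neg]; exact key _ hx _ hy hxy
  · exact key _ hy _ hx hxy

lemma aux_bdd {E : ℝ → ℂ} (hE : Continuous E) {C D : ℝ} (h1 : ∀ᶠ x in atTop, ‖E x‖ ≤ C)
    (h2 : ∀ᶠ x in atBot, ‖E x‖ ≤ D) : ∃ B, ∀ x, ‖E x‖ ≤ B := by
  obtain ⟨u, hu⟩ := eventually_atTop.1 h1
  obtain ⟨v, hv⟩ := eventually_atBot.1 h2
  obtain ⟨B, hB⟩ := (isCompact_Icc (a := v) (b := u)).exists_bound_of_continuousOn hE.continuousOn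
  refine ⟨max B (max C D), fun x => ?_⟩
  rcases le_total x v with h | h
  · exact (hv x h).trans (by simp)
  rcases le_total u x with h' | h'
  · exact (hu x h').trans (by simp)
  · exact (hB x ⟨h, h'⟩).trans (by simp)

lemma aux_prod {f : ℝ → ℂ} {g : ℝ → ℝ} (hf : ∀ a b : ℝ, IntegrableOn f (Set.Icc a b))
    (hg1 : Integrable g) (A B R : ℝ) :
    Integrable (Function.uncurry fun x t : ℝ => f (x - t) * (g t : ℂ))
      ((volume.restrict (Set.Ioc A B)).prod (volume.restrict (Set.Ioc (-R) R))) := by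
  have hf' : Integrable ((Set.Icc (A - R) (B + R)).indicator f) :=
    (integrable_indicator_iff measurableSet_Icc).2 (hf _ _)
  have h1 := Integrable.convolution_integrand (ContinuousLinearMap.mul ℝ ℂ) hg1.ofReal hf'
    (μ := volume) (ν := volume)
  rw [Measure.prod_restrict]
  refine (h1.integrableOn (s := Set.Ioc A B ×ˢ Set.Ioc (-R) R)).congr ?_
  refine (ae_restrict_iff' (measurableSet_Ioc.prod measurableSet_Ioc)).2
    (Eventually.of_forall ?_)
  rintro ⟨x, t⟩ ⟨hx, ht⟩
  simp only [Set.mem_Ioc] at hx ht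
  have : x - t ∈ Set.Icc (A - R) (B + R) := ⟨by linarith, by linarith⟩
  simp only [ContinuousLinearMap.mul_apply', Function.uncurry, Set.indicator_of_mem this]
  exact mul_comm _ _

lemma aux_fub {f : ℝ → ℂ} {g : ℝ → ℝ} (hf : ∀ a b : ℝ, IntegrableOn f (Set.Icc a b))
    (hg1 : Integrable g) (e : ℝ → ℂ) (he : Continuous e) (he1 : ∀ x, ‖e x‖ = 1)
    (hadd : ∀ x t, e (x + t) = e x * e t)
    {A B R : ℝ} (hAB : A ≤ B) (hR : 0 ≤ R) :
    ∫ x in A..B, e x * ∫ t in (-R)..R, f (x - t) * (g t : ℂ) =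
    ∫ t in (-R)..R, (∫ y in (A - t)..(B - t), e y * f y) * (e t * (g t : ℂ)) := by
  have h1 : Integrable (Function.uncurry fun x t : ℝ => e x * (f (x - t) * (g t : ℂ)))
      ((volume.restrict (Set.Ioc A B)).prod (volume.restrict (Set.Ioc (-R) R))) := by
    refine Integrable.bdd_mul (c := 1) (f := fun z : ℝ × ℝ => e z.1) (aux_prod hf hg1 A B R) ?_ ?_
    · exact (he.comp continuous_fst).aestronglyMeasurable
    · exact Eventually.of_forall fun z => (he1 _).le
  have h2 := integral_integral_swap h1
  have hR' : -R ≤ R := by linarith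
  simp only [intervalIntegral.integral_of_le hAB, intervalIntegral.integral_of_le hR']
  simp_rw [integral_const_mul] at h2
  rw [h2]
  congr 1; ext t
  rw [← intervalIntegral.integral_of_le hAB, ← intervalIntegral.integral_mul_const,
    ← intervalIntegral.integral_comp_sub_right (fun y => e y * f y * (e t * (g t : ℂ)))]
  congr 1; ext x
  have := hadd (x - t) t
  rw [sub_add_cancel] at this
  rw [this]; ring

theorem stmt15 (f : ℝ → ℂ) (g : ℝ → ℝ)
    (hf : ∀ a b : ℝ, IntegrableOn f (Set.Icc a b))
    (hF₁ : ∃ c : ℂ, Tendsto (fun x : ℝ => ∫ t in (0:ℝ)..x, f t) atTop (nhds c))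
    (hF₂ : ∃ c : ℂ, Tendsto (fun x : ℝ => ∫ t in (0:ℝ)..x, f t) atBot (nhds c))
    (s : ℝ) (Lf : ℂ) (hfs : HasFourierHK f s Lf)
    (hg1 : Integrable g)
    (hgbv : BoundedVariationOn g Set.univ) :
    ∃ fg : ℝ → ℂ,
      (∀ x : ℝ, Tendsto (fun T : ℝ × ℝ =>
          ∫ t in (-T.1)..T.2, f (x - t) * ((g t : ℝ) : ℂ))
        (atTop ×ˢ atTop) (nhds (fg x))) ∧
      HasFourierHK fg s
        (Lf * ∫ x : ℝ, Complex.exp (-(Complex.I * (s : ℂ) * (x : ℂ))) * ((g x : ℝ) : ℂ)) := by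
  obtain ⟨M, hBM⟩ := IsBM.of_bv hgbv
  have hM0 := hBM.nonneg
  have hi : ∀ a b, IntervalIntegrable f volume a b := fun a b =>
    ⟨(hf a b).mono_set Set.Ioc_subset_Icc_self, (hf b a).mono_set Set.Ioc_subset_Icc_self⟩
  have hix : ∀ x a b, IntervalIntegrable (fun t => f (x - t)) volume a b := by
    intro x a b
    have := (hi (x - a) (x - b)).comp_sub_left x
    simpa using this
  have hgx : ∀ x a b, IntervalIntegrable (fun t => f (x - t) * (g t : ℂ)) volume a b :=
    fun x a b => ⟨hBM.mul_int (hix x a b).1, hBM.mul_int (hix x a b).2⟩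
  have hFx : ∀ x y, ∫ t in (0:ℝ)..y, f (x - t) =
      (∫ t in (0:ℝ)..x, f t) - ∫ t in (0:ℝ)..(x - y), f t := by
    intro x y
    rw [intervalIntegral.integral_comp_sub_left f x,
      intervalIntegral.integral_interval_sub_left (hi _ _) (hi _ _), sub_zero]
  -- boundedness of the primitive
  obtain ⟨BF, hBF⟩ : ∃ B, ∀ x, ‖∫ t in (0:ℝ)..x, f t‖ ≤ B := by
    obtain ⟨c, hc⟩ := hF₁
    obtain ⟨d, hd⟩ := hF₂
    refine aux_bdd (intervalIntegral.continuous_primitive hi 0) (C := ‖c‖ + 1) (D := ‖d‖ + 1) ?_ ?_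
    · exact hc.norm.eventually_le_const (by linarith)
    · exact hd.norm.eventually_le_const (by linarith)
  -- pointwise convergence
  have hT : ∀ x, ∃ c, Tendsto (fun y : ℝ => ∫ t in (0:ℝ)..y, f (x - t) * (g t : ℂ)) atTop (nhds c) := by
    intro x
    refine aux_conv hBM (hix x) atTop ?_ ?_
    · intro S hS
      obtain ⟨u, hu⟩ := mem_atTop_sets.1 hS
      exact ⟨Set.Ici u, Ici_mem_atTop u, hu, Set.ordConnected_Ici⟩
    · obtain ⟨d, hd⟩ := hF₂
      simp_rw [hFx]
      exact ⟨_, tendsto_const_nhds.sub (hd.comp (tendsto_atBot_add_const_left _ x tendsto_neg_atTop_atBot))⟩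
  have hB : ∀ x, ∃ c, Tendsto (fun y : ℝ => ∫ t in (0:ℝ)..y, f (x - t) * (g t : ℂ)) atBot (nhds c) := by
    intro x
    refine aux_conv hBM (hix x) atBot ?_ ?_
    · intro S hS
      obtain ⟨u, hu⟩ := mem_atBot_sets.1 hS
      exact ⟨Set.Iic u, Iic_mem_atBot u, hu, Set.ordConnected_Iic⟩
    · obtain ⟨d, hd⟩ := hF₁
      simp_rw [hFx]
      exact ⟨_, tendsto_const_nhds.sub (hd.comp (tendsto_atTop_add_const_left _ x tendsto_neg_atBot_atTop))⟩
  choose cT hcT using hT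
  choose cB hcB using hB
  have hlim : ∀ x : ℝ, Tendsto (fun T : ℝ × ℝ =>
          ∫ t in (-T.1)..T.2, f (x - t) * ((g t : ℝ) : ℂ))
        (atTop ×ˢ atTop) (nhds (cT x - cB x)) := by
    intro x
    have t2 : Tendsto (Prod.snd : ℝ × ℝ → ℝ) (atTop ×ˢ atTop) atTop := tendsto_snd
    have t1 : Tendsto (Prod.fst : ℝ × ℝ → ℝ) (atTop ×ˢ atTop) atTop := tendsto_fst
    have h1 := ((hcT x).comp t2).sub ((hcB x).comp (tendsto_neg_atTop_atBot.comp t1))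
    refine h1.congr fun T => ?_
    simp only [Function.comp]
    rw [intervalIntegral.integral_interval_sub_left (hgx _ _ _) (hgx _ _ _)]
  refine ⟨fun x => cT x - cB x, hlim, ?_⟩
  set fg : ℝ → ℂ := fun x => cT x - cB x with hfg
  unfold HasFourierHK at *
  set e : ℝ → ℂ := fun x => Complex.exp (-(Complex.I * (s : ℂ) * (x : ℂ))) with he
  change Tendsto (fun T : ℝ × ℝ => ∫ x in (-T.1)..T.2, e x * f x) _ _ at hfs
  change Tendsto (fun T : ℝ × ℝ => ∫ x in (-T.1)..T.2, e x * fg x) _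
    (nhds (Lf * ∫ x : ℝ, e x * (g x : ℂ)))
  have hec : Continuous e := by fun_prop
  have he1 : ∀ x, ‖e x‖ = 1 := by
    intro x
    have : -(Complex.I * (s : ℂ) * (x : ℂ)) = ((-(s * x) : ℝ) : ℂ) * Complex.I := by
      push_cast; ring
    simp only [he]
    rw [this, Complex.norm_exp_ofReal_mul_I]
  have hadd : ∀ x t, e (x + t) = e x * e t := by
    intro x t
    simp only [he]
    rw [← Complex.exp_add]; congr 1; push_cast; ring
  have hei : ∀ a b, IntervalIntegrable (fun x => e x * f x) volume a b := fun a b =>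
    (hi a b).continuousOn_mul hec.continuousOn
  set E : ℝ → ℂ := fun x => ∫ t in (0:ℝ)..x, e t * f t with hE
  have hEc : Continuous E := intervalIntegral.continuous_primitive hei 0
  have hEsub : ∀ a b, ∫ t in a..b, e t * f t = E b - E a := fun a b =>
    (intervalIntegral.integral_interval_sub_left (hei _ _) (hei _ _)).symm
  obtain ⟨BE, hBE⟩ : ∃ B, ∀ x, ‖E x‖ ≤ B := by
    have h1 : ∀ᶠ T : ℝ × ℝ in atTop ×ˢ atTop, ‖∫ x in (-T.1)..T.2, e x * f x‖ ≤ ‖Lf‖ + 1 :=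
      hfs.norm.eventually_le_const (by linarith)
    rw [prod_atTop_atTop_eq, eventually_atTop] at h1
    obtain ⟨⟨u, v⟩, huv⟩ := h1
    refine aux_bdd hEc (C := ‖Lf‖ + 1 + ‖E (-u)‖) (D := ‖Lf‖ + 1 + ‖E v‖) ?_ ?_
    · filter_upwards [eventually_ge_atTop v] with y hy
      have := huv (u, y) ⟨le_rfl, hy⟩
      simp only [hEsub] at this
      have h3 := norm_add_le (E y - E (-u)) (E (-u))
      rw [sub_add_cancel] at h3
      linarith
    · filter_upwards [eventually_le_atBot (-u)] with y hy
      have := huv (-y, v) ⟨by simp only; linarith, le_rfl⟩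
      simp only [hEsub, neg_neg] at this
      have h3 := norm_sub_le (E v) (E v - E y)
      rw [sub_sub_cancel] at h3
      linarith
  have hegi : Integrable (fun t => e t * (g t : ℂ)) :=
    Integrable.bdd_mul (c := 1) hg1.ofReal hec.aestronglyMeasurable
      (Eventually.of_forall fun x => (he1 x).le)
  -- integrated formula
  have hmain : ∀ A B, A ≤ B → ∫ x in A..B, e x * fg x =
      ∫ t, (E (B - t) - E (A - t)) * (e t * (g t : ℂ)) := by
    intro A B hAB
    have hint : Integrable (fun t => (E (B - t) - E (A - t)) * (e t * (g t : ℂ))) := by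
      refine Integrable.bdd_mul (c := BE + BE) hegi ?_ ?_
      · exact Continuous.aestronglyMeasurable (by fun_prop)
      · exact Eventually.of_forall fun x => (norm_sub_le _ _).trans (add_le_add (hBE _) (hBE _))
    have l1 := intervalIntegral_tendsto_integral hint tendsto_neg_atTop_atBot (tendsto_id (x := atTop))
    have l2 : Tendsto (fun R : ℝ => ∫ x in A..B, e x * ∫ t in (-R)..R, f (x - t) * (g t : ℂ)) atTop
        (nhds (∫ x in A..B, e x * fg x)) := by
      refine intervalIntegral.tendsto_integral_filter_of_dominated_convergence
        (fun _ => 6 * M * (BF + BF)) ?_ ?_ ?_ ?_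
      · filter_upwards [eventually_ge_atTop 0] with R hR
        rw [Set.uIoc_of_le hAB]
        refine hec.aestronglyMeasurable.mul ?_
        simp only [intervalIntegral.integral_of_le (show -R ≤ R by linarith)]
        exact (aux_prod hf hg1 A B R).integral_prod_left.aestronglyMeasurable
      · filter_upwards [eventually_ge_atTop 0] with R hR
        refine Eventually.of_forall fun x _ => ?_
        rw [norm_mul, he1, one_mul]
        refine hBM.bound (by linarith) (hix x _ _).1 ?_
        intro c d _ _ _
        rw [intervalIntegral.integral_comp_sub_left f x,
          ← intervalIntegral.integral_interval_sub_left (hi 0 _) (hi 0 _)]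
        exact (norm_sub_le _ _).trans (add_le_add (hBF _) (hBF _))
      · exact intervalIntegrable_const
      · refine Eventually.of_forall fun x _ => ?_
        exact ((hlim x).comp (tendsto_id.prodMk tendsto_id)).const_mul (e x)
    refine tendsto_nhds_unique l2 (l1.congr' ?_)
    filter_upwards [eventually_ge_atTop 0] with R hR
    rw [aux_fub hf hg1 e hec he1 hadd hAB hR]
    simp only [hEsub, id]
  have hfin : Tendsto (fun T : ℝ × ℝ => ∫ t, (E (T.2 - t) - E (-T.1 - t)) * (e t * (g t : ℂ)))
      (atTop ×ˢ atTop) (nhds (∫ t, Lf * (e t * (g t : ℂ)))) := by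
    refine tendsto_integral_filter_of_dominated_convergence
      (fun t => (BE + BE) * ‖e t * (g t : ℂ)‖) ?_ ?_ ?_ ?_
    · refine Eventually.of_forall fun T => ?_
      exact (Continuous.aestronglyMeasurable (by fun_prop)).mul hegi.aestronglyMeasurable
    · refine Eventually.of_forall fun T => Eventually.of_forall fun t => ?_
      rw [norm_mul]
      gcongr
      exact (norm_sub_le _ _).trans (add_le_add (hBE _) (hBE _))
    · exact hegi.norm.const_mul _
    · refine Eventually.of_forall fun t => Tendsto.mul_const _ ?_
      have h1 : Tendsto (fun T : ℝ × ℝ => (T.1 + t, T.2 + -t)) (atTop ×ˢ atTop) (atTop ×ˢ atTop) :=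
        (tendsto_atTop_add_const_right _ t tendsto_fst).prodMk
          (tendsto_atTop_add_const_right _ (-t) tendsto_snd)
      refine (hfs.comp h1).congr fun T => ?_
      simp only [Function.comp, hEsub]
      congr 2 <;> ring
  rw [integral_const_mul] at hfin
  refine hfin.congr' ?_
  have h0 : ∀ᶠ T : ℝ × ℝ in atTop ×ˢ atTop, 0 ≤ T.1 ∧ 0 ≤ T.2 :=
    (tendsto_fst.eventually (eventually_ge_atTop 0)).and
      (tendsto_snd.eventually (eventually_ge_atTop 0))
  filter_upwards [h0] with T hT
  rw [hmain _ _ (by linarith [hT.1, hT.2])]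
end

section
/- Let (a_n) and (b_n) be real sequences with a_n > 0 for all n, Σ_{n=1}^∞ a_n < ∞ and Σ_{n=1}^∞ a_n |b_n| < ∞. Define f : ℝ → ℝ by f(x) = Σ_{n=1}^∞ a_n sin(b_n x)/|x| for x ≠ 0 and f(0) = 0. Then f is locally integrable, and for every s ∈ ℝ not in the closure of the set {b_n : n ∈ ℕ} ∪ {−b_n : n ∈ ℕ}, the Fourier transform f̂(s) exists and f̂(s) = i · Σ_{n=1}^∞ a_n log|(s − b_n)/(s + b_n)| (each summand with b_n = 0 being 0, and the series converging absolutely). -/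
open MeasureTheory Filter

lemma tail_bound (c : ℝ) (hc : c ≠ 0) (T U : ℝ) (hT : 0 < T) (hTU : T ≤ U) :
    ‖∫ x in T..U, Complex.exp (Complex.I * c * x) / (x : ℂ)‖ ≤ 2 / (|c| * T) := by
  have hU : 0 < U := hT.trans_le hTU
  have hcC : (c : ℂ) ≠ 0 := by exact_mod_cast hc
  have hc' : 0 < |c| := abs_pos.mpr hc
  have hmem : ∀ x ∈ Set.uIcc T U, 0 < x := by
    intro x hx
    rw [Set.uIcc_of_le hTU] at hx
    exact hT.trans_le hx.1
  have hne : ∀ x ∈ Set.uIcc T U, (x : ℂ) ≠ 0 := fun x hx => by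
    exact_mod_cast (hmem x hx).ne'
  have hnorm : ∀ x : ℝ, ‖Complex.exp (Complex.I * c * x)‖ = 1 := by
    intro x
    have : Complex.I * c * x = ((c * x : ℝ) : ℂ) * Complex.I := by push_cast; ring
    rw [this, Complex.norm_exp_ofReal_mul_I]
  have hder : ∀ x ∈ Set.uIcc T U, HasDerivAt
      (fun x : ℝ => Complex.exp (Complex.I * c * x) / (Complex.I * c * x))
      (Complex.exp (Complex.I * c * x) / (x : ℂ)
        - Complex.exp (Complex.I * c * x) / (Complex.I * c * x ^ 2)) x := by
    intro x hx
    have h1 : HasDerivAt (fun x : ℝ => Complex.I * c * (x : ℂ)) (Complex.I * c) x := by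
      simpa using (Complex.ofRealCLM.hasDerivAt (x := x)).const_mul (Complex.I * (c : ℂ))
    have hx0 := hne x hx
    have h2 := h1.cexp.div h1 (by simp [hcC, hx0])
    refine h2.congr_deriv ?_
    have := Complex.I_ne_zero
    field_simp
  have hi1 : IntervalIntegrable (fun x : ℝ => Complex.exp (Complex.I * c * x) / (x : ℂ))
      volume T U := by
    apply ContinuousOn.intervalIntegrable
    exact ContinuousOn.div (by fun_prop) (by fun_prop) hne
  have hi2 : IntervalIntegrable
      (fun x : ℝ => Complex.exp (Complex.I * c * x) / (Complex.I * c * x ^ 2)) volume T U := by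
    apply ContinuousOn.intervalIntegrable
    refine ContinuousOn.div (by fun_prop) (by fun_prop) ?_
    intro x hx
    simp [hcC, hne x hx]
  have hftc := intervalIntegral.integral_eq_sub_of_hasDerivAt hder (hi1.sub hi2)
  rw [intervalIntegral.integral_sub hi1 hi2, sub_eq_iff_eq_add] at hftc
  rw [hftc]
  have hb : ‖∫ x in T..U, Complex.exp (Complex.I * c * x) / (Complex.I * c * x ^ 2)‖
      ≤ ∫ x in T..U, (1 / |c|) * (1 / x ^ 2) := by
    apply intervalIntegral.norm_integral_le_of_norm_le hTU
    · refine Filter.Eventually.of_forall fun x hx => ?_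
      rw [norm_div, hnorm]
      simp
      rw [mul_comm]
    · apply ContinuousOn.intervalIntegrable
      refine ContinuousOn.mul (by fun_prop) (ContinuousOn.div (by fun_prop) (by fun_prop) ?_)
      intro x hx
      exact pow_ne_zero _ (hmem x hx).ne'
  have hv : ∫ x in T..U, (1 / |c|) * (1 / x ^ 2) = (1 / |c|) * (1 / T - 1 / U) := by
    have hd : ∀ x ∈ Set.uIcc T U, HasDerivAt (fun x : ℝ => (1 / |c|) * (- x⁻¹))
        ((1 / |c|) * (1 / x ^ 2)) x := by
      intro x hx
      have := ((hasDerivAt_inv (hmem x hx).ne').neg).const_mul (1 / |c|)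
      refine this.congr_deriv ?_
      simp
    rw [intervalIntegral.integral_eq_sub_of_hasDerivAt hd]
    · simp; ring
    · apply ContinuousOn.intervalIntegrable
      refine ContinuousOn.mul (by fun_prop) (ContinuousOn.div (by fun_prop) (by fun_prop) ?_)
      intro x hx
      exact pow_ne_zero _ (hmem x hx).ne'
  rw [hv] at hb
  have hn : ∀ x : ℝ, 0 < x →
      ‖Complex.exp (Complex.I * c * x) / (Complex.I * c * x)‖ = (1 / |c|) * (1 / x) := by
    intro x hx
    rw [norm_div, hnorm]
    simp [abs_of_pos hx]
    rw [mul_comm]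
  refine (norm_add_le _ _).trans ?_
  refine (add_le_add (norm_sub_le _ _) hb).trans ?_
  rw [hn U hU, hn T hT]
  apply le_of_eq
  field_simp
  ring

/-- one term -/
noncomputable def gterm (s b : ℝ) (x : ℝ) : ℂ :=
  Complex.exp (-(Complex.I * (s : ℂ) * (x : ℂ))) * ((Real.sin (b * x) / |x| : ℝ) : ℂ)

lemma sinc_bound (b x : ℝ) : abs (Real.sin (b * x) / abs x) ≤ abs b := by
  rw [abs_div, abs_abs]
  apply div_le_of_le_mul₀ (abs_nonneg _) (abs_nonneg _)
  rw [← abs_mul]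
  exact Real.abs_sin_le_abs

lemma exp_norm (s x : ℝ) : ‖Complex.exp (-(Complex.I * (s : ℂ) * (x : ℂ)))‖ = 1 := by
  have : -(Complex.I * s * x) = ((-(s * x) : ℝ) : ℂ) * Complex.I := by push_cast; ring
  rw [this, Complex.norm_exp_ofReal_mul_I]

lemma gterm_bound (s b x : ℝ) : ‖gterm s b x‖ ≤ |b| := by
  unfold gterm
  rw [norm_mul, exp_norm, one_mul, Complex.norm_real]
  exact sinc_bound b x

lemma gterm_meas (s b : ℝ) : Measurable (gterm s b) := by
  unfold gterm
  fun_prop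

lemma gterm_int (s b T U : ℝ) : IntervalIntegrable (gterm s b) volume T U := by
  refine IntervalIntegrable.mono_fun' (g := fun _ => |b|) (by simp)
    (gterm_meas s b).aestronglyMeasurable ?_
  exact Filter.Eventually.of_forall fun x => gterm_bound s b x

lemma gterm_tail (s b δ : ℝ) (hδ : 0 < δ) (h1 : δ ≤ |s - b|) (h2 : δ ≤ |s + b|)
    (T U : ℝ) (hT : 0 < T) (hTU : T ≤ U) :
    ‖∫ x in T..U, gterm s b x‖ ≤ 2 / (δ * T) := by
  have hc1 : b - s ≠ 0 := by
    intro h; rw [show s - b = 0 by linarith] at h1; simp at h1; linarith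
  have hc2 : -(b + s) ≠ 0 := by
    intro h; rw [show s + b = 0 by linarith] at h2; simp at h2; linarith
  have hmem : ∀ x ∈ Set.uIcc T U, 0 < x := by
    intro x hx
    rw [Set.uIcc_of_le hTU] at hx
    exact hT.trans_le hx.1
  have hi : ∀ c : ℝ, IntervalIntegrable (fun x : ℝ => Complex.exp (Complex.I * c * x) / (x : ℂ))
      volume T U := by
    intro c
    apply ContinuousOn.intervalIntegrable
    exact ContinuousOn.div (by fun_prop) (by fun_prop)
      (fun x hx => by exact_mod_cast (hmem x hx).ne')
  have heq : ∫ x in T..U, gterm s b x = (1 / (2 * Complex.I)) *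
      ((∫ x in T..U, Complex.exp (Complex.I * (b - s : ℝ) * x) / (x : ℂ))
      - ∫ x in T..U, Complex.exp (Complex.I * (-(b + s) : ℝ) * x) / (x : ℂ)) := by
    rw [← intervalIntegral.integral_sub (hi _) (hi _), ← intervalIntegral.integral_const_mul]
    apply intervalIntegral.integral_congr
    intro x hx
    have hx0 := hmem x hx
    simp only [gterm]
    rw [abs_of_pos hx0]
    push_cast
    rw [Complex.sin]
    have e1 : Complex.exp (Complex.I * (b - s) * x)
      = Complex.exp (-(Complex.I * s * x)) * Complex.exp (b * x * Complex.I) := by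
      rw [← Complex.exp_add]; ring_nf
    have e2 : Complex.exp (Complex.I * -(b + s) * x)
      = Complex.exp (-(Complex.I * s * x)) * Complex.exp (-(b * x) * Complex.I) := by
      rw [← Complex.exp_add]; ring_nf
    rw [e1, e2]
    have := Complex.I_ne_zero
    have hxc : (x : ℂ) ≠ 0 := by exact_mod_cast hx0.ne'
    field_simp
    rw [Complex.I_sq]
    ring
  rw [heq, norm_mul]
  have t1 := tail_bound _ hc1 T U hT hTU
  have t2 := tail_bound _ hc2 T U hT hTU
  have u1 : 2 / (|b - s| * T) ≤ 2 / (δ * T) := by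
    rw [abs_sub_comm]; gcongr
  have u2 : 2 / (|-(b + s)| * T) ≤ 2 / (δ * T) := by
    rw [abs_neg, add_comm]; gcongr
  have hn : ‖(1 / (2 * Complex.I) : ℂ)‖ = 1 / 2 := by simp
  rw [hn]
  have := norm_sub_le (∫ x in T..U, Complex.exp (Complex.I * (b - s : ℝ) * x) / (x : ℂ))
    (∫ x in T..U, Complex.exp (Complex.I * (-(b + s) : ℝ) * x) / (x : ℂ))
  linarith

lemma cos_tail (T U : ℝ) (hT : 0 < T) (hU : 0 < U) :
    |∫ x in T..U, Real.cos x / x| ≤ 2 / T + 2 / U := by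
  wlog hTU : T ≤ U with H
  · rw [intervalIntegral.integral_symm, abs_neg, add_comm]
    exact H U T hU hT (le_of_not_ge hTU)
  have hmem : ∀ x ∈ Set.uIcc T U, 0 < x := by
    intro x hx
    rw [Set.uIcc_of_le hTU] at hx
    exact hT.trans_le hx.1
  have h := tail_bound 1 one_ne_zero T U hT hTU
  have hi : IntervalIntegrable (fun x : ℝ => Complex.exp (Complex.I * (1 : ℝ) * x) / (x : ℂ))
      volume T U := by
    apply ContinuousOn.intervalIntegrable
    exact ContinuousOn.div (by fun_prop) (by fun_prop)
      (fun x hx => by exact_mod_cast (hmem x hx).ne')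
  have hre : (∫ x in T..U, Complex.exp (Complex.I * (1 : ℝ) * x) / (x : ℂ)).re
      = ∫ x in T..U, Real.cos x / x := by
    have := Complex.reCLM.intervalIntegral_comp_comm hi
    simp only [Complex.reCLM_apply] at this
    rw [← this]
    apply intervalIntegral.integral_congr
    intro x hx
    simp only
    rw [Complex.div_ofReal_re]
    congr 1
    rw [show Complex.I * (1 : ℝ) * x = (x : ℂ) * Complex.I by push_cast; ring,
      Complex.exp_ofReal_mul_I_re]
  rw [← hre]
  refine (Complex.abs_re_le_norm _).trans (h.trans ?_)
  simp
  positivity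

noncomputable def cinF (T : ℝ) : ℝ := ∫ x in (0:ℝ)..T, (1 - Real.cos x) / x

lemma cin_int (p T U : ℝ) :
    IntervalIntegrable (fun x => (1 - Real.cos (p * x)) / x) volume T U := by
  refine IntervalIntegrable.mono_fun' (g := fun _ => |p|) (by simp)
    (by fun_prop : Measurable _).aestronglyMeasurable ?_
  refine Filter.Eventually.of_forall fun x => ?_
  simp only [Real.norm_eq_abs]
  rw [abs_div]
  apply div_le_of_le_mul₀ (abs_nonneg _) (abs_nonneg _)
  rw [← abs_mul]
  have h1 := Real.one_sub_sq_div_two_le_cos (x := p * x)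
  have h2 := Real.cos_le_one (p * x)
  have h3 := Real.neg_one_le_cos (p * x)
  rw [abs_of_nonneg (by linarith)]
  have h4 : (p * x) ^ 2 = |p * x| ^ 2 := (sq_abs _).symm
  rcases le_total (|p * x|) 2 with h | h
  · nlinarith [abs_nonneg (p * x)]
  · linarith

lemma cin_scale (p T : ℝ) (hp : p ≠ 0) :
    ∫ x in (0:ℝ)..T, (1 - Real.cos (p * x)) / x = cinF (|p| * T) := by
  have hp' : |p| ≠ 0 := abs_ne_zero.mpr hp
  unfold cinF
  have := intervalIntegral.mul_integral_comp_mul_left (a := 0) (b := T) (c := |p|)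
    (f := fun x => (1 - Real.cos x) / x)
  rw [mul_zero] at this
  rw [← this, ← intervalIntegral.integral_const_mul]
  apply intervalIntegral.integral_congr
  intro x _
  simp only
  have : Real.cos (|p| * x) = Real.cos (p * x) := by
    rcases abs_choice p with h | h <;> rw [h]
    rw [neg_mul, Real.cos_neg]
  rw [this]
  rcases eq_or_ne x 0 with rfl | hx
  · simp
  · field_simp

lemma cin_diff (p q : ℝ) (hp : 0 < p) (hq : 0 < q) :
    Tendsto (fun T : ℝ => cinF (q * T) - cinF (p * T)) atTop (nhds (Real.log (q / p))) := by
  have key : ∀ T : ℝ, 0 < T → |(cinF (q * T) - cinF (p * T)) - Real.log (q / p)|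
      ≤ (2 / p + 2 / q) * T⁻¹ := by
    intro T hT
    have hpT : 0 < p * T := by positivity
    have hqT : 0 < q * T := by positivity
    have hpos : ∀ x ∈ Set.uIcc (p * T) (q * T), 0 < x := by
      intro x hx
      exact (lt_min hpT hqT).trans_le hx.1
    have hI := cin_int 1
    simp only [one_mul] at hI
    have e1 : cinF (q * T) - cinF (p * T) = ∫ x in (p * T)..(q * T), (1 - Real.cos x) / x := by
      unfold cinF
      exact intervalIntegral.integral_interval_sub_left (hI _ _) (hI _ _)
    have e2 : ∫ x in (p * T)..(q * T), (1 - Real.cos x) / x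
        = (∫ x in (p * T)..(q * T), x⁻¹) - ∫ x in (p * T)..(q * T), Real.cos x / x := by
      rw [← intervalIntegral.integral_sub]
      · apply intervalIntegral.integral_congr
        intro x _
        simp only
        ring
      · apply ContinuousOn.intervalIntegrable
        exact ContinuousOn.inv₀ (by fun_prop) (fun x hx => (hpos x hx).ne')
      · apply ContinuousOn.intervalIntegrable
        exact ContinuousOn.div (by fun_prop) (by fun_prop) (fun x hx => (hpos x hx).ne')
    rw [e1, e2, integral_inv_of_pos hpT hqT, mul_div_mul_right _ _ hT.ne', sub_sub_cancel_left,
      abs_neg]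
    refine (cos_tail _ _ hpT hqT).trans (le_of_eq ?_)
    field_simp
  rw [tendsto_iff_norm_sub_tendsto_zero]
  refine squeeze_zero' (Filter.Eventually.of_forall fun _ => norm_nonneg _)
    ((eventually_gt_atTop 0).mono fun T hT => key T hT) ?_
  simpa using tendsto_inv_atTop_zero.const_mul (2 / p + 2 / q)

lemma gterm_sub (s b T : ℝ) (hT : 0 ≤ T) (h1 : s - b ≠ 0) (h2 : s + b ≠ 0) :
    (∫ x in (0:ℝ)..T, gterm s b x) - ∫ x in (0:ℝ)..T, gterm (-s) b x
      = -(Complex.I * ((cinF (|s + b| * T) - cinF (|s - b| * T) : ℝ) : ℂ)) := by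
  rw [← intervalIntegral.integral_sub (gterm_int _ _ _ _) (gterm_int _ _ _ _),
    ← cin_scale _ _ h1, ← cin_scale _ _ h2,
    ← intervalIntegral.integral_sub (cin_int _ _ _) (cin_int _ _ _),
    ← intervalIntegral.integral_ofReal, ← neg_mul, ← intervalIntegral.integral_const_mul]
  apply intervalIntegral.integral_congr
  intro x hx
  rw [Set.uIcc_of_le hT] at hx
  simp only [gterm]
  rw [abs_of_nonneg hx.1]
  have e1 : Complex.exp (-(Complex.I * s * x))
      = Complex.cos (s * x) - Complex.sin (s * x) * Complex.I := by
    rw [show -(Complex.I * s * x) = (-(s * x)) * Complex.I by ring, Complex.exp_mul_I]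
    simp; ring
  have e2 : Complex.exp (-(Complex.I * (-s : ℝ) * x))
      = Complex.cos (s * x) + Complex.sin (s * x) * Complex.I := by
    rw [show -(Complex.I * (-s : ℝ) * x) = (s * x) * Complex.I by push_cast; ring,
      Complex.exp_mul_I]
  rw [e1, e2]
  push_cast
  rw [sub_mul (s : ℂ), add_mul (s : ℂ), Complex.cos_sub, Complex.cos_add]
  ring

lemma gterm_refl (s b T : ℝ) (_hT : 0 ≤ T) :
    ∫ x in (-T)..0, gterm s b x = - ∫ x in (0:ℝ)..T, gterm (-s) b x := by
  have := intervalIntegral.integral_comp_neg (a := 0) (b := T) (gterm s b)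
  rw [neg_zero] at this
  rw [← this, ← intervalIntegral.integral_neg]
  apply intervalIntegral.integral_congr
  intro x _
  simp only [gterm]
  rw [abs_neg, mul_neg, Real.sin_neg]
  push_cast
  ring_nf

lemma gterm_full (s b T U : ℝ) (hT : 0 ≤ T) :
    ∫ x in (-T)..U, gterm s b x
      = (∫ x in (0:ℝ)..U, gterm s b x) - ∫ x in (0:ℝ)..T, gterm (-s) b x := by
  rw [← intervalIntegral.integral_add_adjacent_intervals (gterm_int s b (-T) 0)
    (gterm_int s b 0 U), gterm_refl s b T hT]
  ring

lemma gterm_half_bound (s b δ : ℝ) (hδ : 0 < δ) (h1 : δ ≤ |s - b|) (h2 : δ ≤ |s + b|)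
    (T : ℝ) (hT : 1 ≤ T) : ‖∫ x in (0:ℝ)..T, gterm s b x‖ ≤ |b| + 2 / δ := by
  rw [← intervalIntegral.integral_add_adjacent_intervals (gterm_int s b 0 1)
    (gterm_int s b 1 T)]
  refine (norm_add_le _ _).trans (add_le_add ?_ ?_)
  · have := intervalIntegral.norm_integral_le_of_norm_le_const (a := 0) (b := 1)
      (f := gterm s b) (C := |b|) (fun x _ => gterm_bound s b x)
    simpa using this
  · simpa using gterm_tail s b δ hδ h1 h2 1 T one_pos hT

lemma flip_bounds {s b δ : ℝ} (h1 : δ ≤ |s - b|) (h2 : δ ≤ |s + b|) :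
    δ ≤ |-s - b| ∧ δ ≤ |-s + b| := by
  constructor
  · rwa [show -s - b = -(s + b) by ring, abs_neg]
  · rwa [show -s + b = -(s - b) by ring, abs_neg]

lemma gterm_full_bound (s b δ : ℝ) (hδ : 0 < δ) (h1 : δ ≤ |s - b|) (h2 : δ ≤ |s + b|)
    (T U : ℝ) (hT : 1 ≤ T) (hU : 1 ≤ U) :
    ‖∫ x in (-T)..U, gterm s b x‖ ≤ 2 * (|b| + 2 / δ) := by
  rw [gterm_full s b T U (by linarith)]
  obtain ⟨h3, h4⟩ := flip_bounds h1 h2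
  have := norm_sub_le (∫ x in (0:ℝ)..U, gterm s b x) (∫ x in (0:ℝ)..T, gterm (-s) b x)
  have := gterm_half_bound s b δ hδ h1 h2 U hU
  have := gterm_half_bound (-s) b δ hδ h3 h4 T hT
  linarith

lemma gterm_tail' (s b δ : ℝ) (hδ : 0 < δ) (h1 : δ ≤ |s - b|) (h2 : δ ≤ |s + b|)
    (T U : ℝ) (hT : 0 < T) (hU : 0 < U) :
    ‖∫ x in T..U, gterm s b x‖ ≤ 2 / δ * (T⁻¹ + U⁻¹) := by
  have e : ∀ V : ℝ, 2 / (δ * V) = 2 / δ * V⁻¹ := fun V => by rw [← div_div]; rfl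
  have hp : ∀ V : ℝ, 0 < V → 0 ≤ 2 / δ * V⁻¹ := fun V hV => by positivity
  have := hp T hT
  have := hp U hU
  rcases le_total T U with h | h
  · have := gterm_tail s b δ hδ h1 h2 T U hT h
    rw [e] at this; linarith
  · have := gterm_tail s b δ hδ h1 h2 U T hU h
    rw [intervalIntegral.integral_symm, norm_neg]
    rw [e] at this; linarith

lemma gterm_tendsto (s b δ : ℝ) (hδ : 0 < δ) (h1 : δ ≤ |s - b|) (h2 : δ ≤ |s + b|) :
    Tendsto (fun T : ℝ × ℝ => ∫ x in (-T.1)..T.2, gterm s b x) (atTop ×ˢ atTop)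
      (nhds (Complex.I * ((Real.log (abs ((s - b) / (s + b))) : ℝ) : ℂ))) := by
  obtain ⟨h3, h4⟩ := flip_bounds h1 h2
  have p1 : 0 < |s - b| := by linarith
  have p2 : 0 < |s + b| := by linarith
  have A : Tendsto (fun T : ℝ × ℝ =>
      -(Complex.I * ((cinF (|s + b| * T.2) - cinF (|s - b| * T.2) : ℝ) : ℂ)))
      (atTop ×ˢ atTop) (nhds (-(Complex.I * ((Real.log (|s + b| / |s - b|) : ℝ) : ℂ)))) := by
    have := (cin_diff _ _ p1 p2).comp
      (tendsto_snd : Tendsto (Prod.snd : ℝ × ℝ → ℝ) (atTop ×ˢ atTop) atTop)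
    exact (((Complex.continuous_ofReal.tendsto _).comp this).const_mul Complex.I).neg
  have B : Tendsto (fun T : ℝ × ℝ => ∫ x in T.1..T.2, gterm (-s) b x)
      (atTop ×ˢ atTop) (nhds 0) := by
    have hev : ∀ᶠ T : ℝ × ℝ in atTop ×ˢ atTop, 0 < T.1 ∧ 0 < T.2 :=
      (eventually_gt_atTop 0).prod_mk (eventually_gt_atTop 0)
    refine squeeze_zero_norm' (hev.mono fun T hT =>
      gterm_tail' (-s) b δ hδ h3 h4 T.1 T.2 hT.1 hT.2) ?_
    have := ((tendsto_inv_atTop_zero (𝕜 := ℝ)).comp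
      (tendsto_fst : Tendsto (Prod.fst : ℝ × ℝ → ℝ) (atTop ×ˢ atTop) atTop)).add
      ((tendsto_inv_atTop_zero (𝕜 := ℝ)).comp
      (tendsto_snd : Tendsto (Prod.snd : ℝ × ℝ → ℝ) (atTop ×ˢ atTop) atTop))
    simpa using this.const_mul (2 / δ)
  have hlog : Complex.I * ((Real.log (abs ((s - b) / (s + b))) : ℝ) : ℂ)
      = -(Complex.I * ((Real.log (|s + b| / |s - b|) : ℝ) : ℂ)) + 0 := by
    rw [abs_div, ← inv_div, Real.log_inv]
    push_cast; ring
  rw [hlog]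
  refine (A.add B).congr' ?_
  have hev : ∀ᶠ T : ℝ × ℝ in atTop ×ˢ atTop, 0 < T.1 ∧ 0 < T.2 :=
    (eventually_gt_atTop 0).prod_mk (eventually_gt_atTop 0)
  filter_upwards [hev] with T hT
  rw [gterm_full s b _ _ hT.1.le, ← gterm_sub s b T.2 hT.2.le (abs_pos.mp p1) (abs_pos.mp p2),
    ← intervalIntegral.integral_interval_sub_left (gterm_int (-s) b 0 T.2) (gterm_int (-s) b 0 T.1)]
  ring

/-- Example 2(f): for `f(x) = Σ aₙ sin(bₙ x)/|x|` with `aₙ > 0`, `Σ aₙ < ∞`,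
`Σ aₙ |bₙ| < ∞`, the function `f` is locally integrable and, for `s` outside the closure
of `{±bₙ}`, `f̂(s) = i Σ aₙ log|(s − bₙ)/(s + bₙ)|`, the series converging absolutely. -/
theorem stmt19 (a b : ℕ → ℝ) (ha : ∀ n : ℕ, 0 < a n)
    (hsa : Summable a) (hsab : Summable (fun n : ℕ => a n * |b n|)) :
    (∀ c d : ℝ, IntegrableOn (fun x : ℝ =>
        if x = 0 then (0:ℝ) else ∑' n : ℕ, a n * Real.sin (b n * x) / |x|) (Set.Icc c d)) ∧
    ∀ s : ℝ, s ∉ closure (Set.range b ∪ Set.range (fun n : ℕ => -b n)) →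
      Summable (fun n : ℕ => abs (a n * Real.log (abs ((s - b n) / (s + b n))))) ∧
      HasFourierHK (fun x : ℝ =>
          (((if x = 0 then (0:ℝ) else ∑' n : ℕ, a n * Real.sin (b n * x) / |x|) : ℝ) : ℂ)) s
        (Complex.I *
          (((∑' n : ℕ, a n * Real.log (abs ((s - b n) / (s + b n)))) : ℝ) : ℂ)) := by
  have hfe : (fun x : ℝ => if x = 0 then (0:ℝ) else ∑' n : ℕ, a n * Real.sin (b n * x) / |x|)
      = fun x : ℝ => ∑' n : ℕ, a n * (Real.sin (b n * x) / |x|) := by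
    funext x
    split_ifs with h
    · subst h; simp
    · simp only [mul_div_assoc]
  have hfe' := fun x => congrFun hfe x
  simp only [hfe']
  have htb : ∀ n x, ‖a n * (Real.sin (b n * x) / |x|)‖ ≤ a n * |b n| := by
    intro n x
    rw [norm_mul, Real.norm_eq_abs, Real.norm_eq_abs, abs_of_pos (ha n)]
    exact mul_le_mul_of_nonneg_left (sinc_bound _ _) (ha n).le
  have hsum : ∀ x, Summable (fun n => a n * (Real.sin (b n * x) / |x|)) := fun x =>
    Summable.of_norm_bounded hsab (fun n => htb n x)
  constructor
  · intro c d
    have hm : Measurable (fun x : ℝ => ∑' n : ℕ, a n * (Real.sin (b n * x) / |x|)) := by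
      refine measurable_of_tendsto_metrizable
        (f := fun N x => ∑ n ∈ Finset.range N, a n * (Real.sin (b n * x) / |x|))
        (fun N => by fun_prop) ?_
      rw [tendsto_pi_nhds]
      intro x
      exact (hsum x).hasSum.tendsto_sum_nat
    refine Measure.integrableOn_of_bounded (M := ∑' n, a n * |b n|) (by simp)
      hm.aestronglyMeasurable ?_
    exact Filter.Eventually.of_forall fun x => tsum_of_norm_bounded hsab.hasSum (fun n => htb n x)
  · intro s hs
    obtain ⟨δ, hδ, hball⟩ : ∃ δ > 0, ∀ y ∈ Set.range b ∪ Set.range (fun n : ℕ => -b n),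
        δ ≤ |s - y| := by
      rw [Metric.mem_closure_iff] at hs
      push Not at hs
      simpa only [Real.dist_eq] using hs
    have h1 : ∀ n, δ ≤ |s - b n| := fun n => hball _ (Or.inl ⟨n, rfl⟩)
    have h2 : ∀ n, δ ≤ |s + b n| := fun n => by
      simpa using hball _ (Or.inr ⟨n, rfl⟩)
    have hbs : Summable (fun n => a n * (2 * (|b n| + 2 / δ))) := by
      have := (hsab.mul_left 2).add (hsa.mul_left (2 * (2 / δ)))
      refine this.congr fun n => ?_
      ring
    have hev : ∀ᶠ T : ℝ × ℝ in atTop ×ˢ atTop, 1 ≤ T.1 ∧ 1 ≤ T.2 :=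
      (eventually_ge_atTop 1).prod_mk (eventually_ge_atTop 1)
    have hlogb : ∀ n, |a n * Real.log (abs ((s - b n) / (s + b n)))|
        ≤ a n * (2 * (|b n| + 2 / δ)) := by
      intro n
      rw [abs_mul, abs_of_pos (ha n)]
      refine mul_le_mul_of_nonneg_left ?_ (ha n).le
      have := le_of_tendsto (gterm_tendsto s (b n) δ hδ (h1 n) (h2 n)).norm
        (hev.mono fun T hT => gterm_full_bound s (b n) δ hδ (h1 n) (h2 n) T.1 T.2 hT.1 hT.2)
      rwa [norm_mul, Complex.norm_I, one_mul, Complex.norm_real, Real.norm_eq_abs] at this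
    have hlogs := Summable.of_nonneg_of_le (fun n => abs_nonneg _) hlogb hbs
    refine ⟨hlogs, ?_⟩
    unfold HasFourierHK
    have hlim : Complex.I *
          (((∑' n : ℕ, a n * Real.log (abs ((s - b n) / (s + b n)))) : ℝ) : ℂ)
        = ∑' n : ℕ, (a n : ℂ) *
          (Complex.I * ((Real.log (abs ((s - b n) / (s + b n))) : ℝ) : ℂ)) := by
      rw [Complex.ofReal_tsum, ← tsum_mul_left]
      refine tsum_congr fun n => ?_
      push_cast; ring
    have hint : ∀ T : ℝ × ℝ, ∫ x in (-T.1)..T.2, Complex.exp (-(Complex.I * (s : ℂ) * (x : ℂ))) *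
          ((∑' n : ℕ, a n * (Real.sin (b n * x) / |x|) : ℝ) : ℂ)
        = ∑' n : ℕ, (a n : ℂ) * ∫ x in (-T.1)..T.2, gterm s (b n) x := by
      intro T
      have := intervalIntegral.hasSum_integral_of_dominated_convergence (μ := volume)
        (a := -T.1) (b := T.2)
        (F := fun n x => (a n : ℂ) * gterm s (b n) x)
        (f := fun x : ℝ => Complex.exp (-(Complex.I * (s : ℂ) * (x : ℂ))) *
          ((∑' n : ℕ, a n * (Real.sin (b n * x) / |x|) : ℝ) : ℂ))
        (bound := fun n _ => a n * |b n|)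
        (fun n => ((gterm_meas s (b n)).const_mul _).aestronglyMeasurable)
        (fun n => Filter.Eventually.of_forall fun x _ => by
          rw [norm_mul, Complex.norm_real, Real.norm_eq_abs, abs_of_pos (ha n)]
          exact mul_le_mul_of_nonneg_left (gterm_bound _ _ _) (ha n).le)
        (Filter.Eventually.of_forall fun x _ => hsab)
        (by simp)
        (Filter.Eventually.of_forall fun x _ => by
          have h := (Complex.hasSum_ofReal.mpr (hsum x).hasSum).mul_left
            (Complex.exp (-(Complex.I * (s : ℂ) * (x : ℂ))))
          refine h.congr_fun ?_
          intro n
          simp only [gterm]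
          push_cast; ring)
      rw [← this.tsum_eq]
      refine tsum_congr fun n => ?_
      rw [intervalIntegral.integral_const_mul]
    rw [hlim]
    simp only [hint]
    refine tendsto_tsum_of_dominated_convergence hbs
      (fun n => (gterm_tendsto s (b n) δ hδ (h1 n) (h2 n)).const_mul _) ?_
    filter_upwards [hev] with T hT n
    rw [norm_mul, Complex.norm_real, Real.norm_eq_abs, abs_of_pos (ha n)]
    exact mul_le_mul_of_nonneg_left
      (gterm_full_bound s (b n) δ hδ (h1 n) (h2 n) T.1 T.2 hT.1 hT.2) (ha n).le
end
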